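/- Let p be a real number with 1 ≤ p < ∞. Let G̃ : ℓ^m → ℓ^r (the true plant) be strictly causal, ℓ_p-stable, and incrementally finite-gain ℓ_p-stable, and let G : ℓ^m → ℓ^r (the nominal model) be strictly causal. Assume that the mismatch output is always summable: G̃ u − G u ∈ ℓ_p^r for every sequence u ∈ ℓ^m (not only for u ∈ ℓ_p^m). Then for every causal, ℓ_p-stable operator Q : ℓ^r → ℓ^m, the closed loop with the internal-model controller built from G applied to the plant G̃ (the unique signals satisfying u° = Q ω, ω = y − G u°, y = G̃(u° + d) + v) is ℓ_p-stable: for all v ∈ ℓ_p^r and d ∈ ℓ_p^m, one has ω ∈ ℓ_p^r, u° ∈ ℓ_p^m, and y ∈ ℓ_p^r. -/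

import Mathlib

/-- Sequences with values in `ℝ^n` (with the Euclidean norm). -/
abbrev Traj (n : ℕ) : Type := ℕ → EuclideanSpace ℝ (Fin n)

/-- A causal operator on sequences. -/
def Causal {n m : ℕ} (A : Traj n → Traj m) : Prop :=
  ∀ (x x' : Traj n) (t : ℕ), (∀ s, s ≤ t → x s = x' s) → A x t = A x' t

/-- A strictly causal operator on sequences. -/
def StrictlyCausal {n m : ℕ} (A : Traj n → Traj m) : Prop :=
  ∀ (x x' : Traj n) (t : ℕ), (∀ s, s < t → x s = x' s) → A x t = A x' t

/-- Causal in the first argument, strictly causal in the second argument. -/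
def CausalSC {n q m : ℕ} (B : Traj n → Traj q → Traj m) : Prop :=
  ∀ (x x' : Traj n) (z z' : Traj q) (t : ℕ),
    (∀ s, s ≤ t → x s = x' s) → (∀ s, s < t → z s = z' s) → B x z t = B x' z' t

/-- Causal in both arguments. -/
def CausalCC {n q m : ℕ} (B : Traj n → Traj q → Traj m) : Prop :=
  ∀ (x x' : Traj n) (z z' : Traj q) (t : ℕ),
    (∀ s, s ≤ t → x s = x' s) → (∀ s, s ≤ t → z s = z' s) → B x z t = B x' z' t

/-- Strictly causal in both arguments. -/
def CausalSS {n q m : ℕ} (B : Traj n → Traj q → Traj m) : Prop :=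
  ∀ (x x' : Traj n) (z z' : Traj q) (t : ℕ),
    (∀ s, s < t → x s = x' s) → (∀ s, s < t → z s = z' s) → B x z t = B x' z' t

/-- Membership in `ℓ_p`: summability of `‖x t‖ ^ p`. -/
def InLp (p : ℝ) {E : Type*} [Norm E] (x : ℕ → E) : Prop :=
  Summable fun t => ‖x t‖ ^ p

/-- The `ℓ_p` norm `(∑ₜ ‖x t‖ ^ p) ^ (1/p)` of a sequence. -/
noncomputable def lpSeqNorm (p : ℝ) {E : Type*} [Norm E] (x : ℕ → E) : ℝ :=
  (∑' t, ‖x t‖ ^ p) ^ (1 / p)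

/-- The `ℝ^{r+m}`-valued sequence obtained by stacking `v` and `d`
(the norm of `(v t, d t)` is the Euclidean norm of the concatenated vector). -/
noncomputable def pairSeq {r m : ℕ} (v : Traj r) (d : Traj m) :
    ℕ → WithLp 2 (EuclideanSpace ℝ (Fin r) × EuclideanSpace ℝ (Fin m)) :=
  fun t => (WithLp.equiv 2 _).symm (v t, d t)

/-- An exponentially decaying sequence: `‖x t‖ ≤ k · α ^ t` with `k > 0`, `α ∈ (0,1)`. -/
def ExpDecay {E : Type*} [Norm E] (x : ℕ → E) : Prop :=
  ∃ k : ℝ, 0 < k ∧ ∃ α : ℝ, 0 < α ∧ α < 1 ∧ ∀ t, ‖x t‖ ≤ k * α ^ t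

theorem inLp_iff_mem {n : ℕ} (p : ℝ) (hp : 1 ≤ p) (x : Traj n) :
    InLp p x ↔ Memℓp x (ENNReal.ofReal p) := by
  have h : (ENNReal.ofReal p).toReal = p := ENNReal.toReal_ofReal (by linarith)
  rw [memℓp_gen_iff (by rw [h]; linarith), h]
  rfl

theorem inLp_add {n : ℕ} (p : ℝ) (hp : 1 ≤ p) {x y : Traj n} (hx : InLp p x) (hy : InLp p y) :
    InLp p (x + y) := by
  rw [inLp_iff_mem p hp] at *
  exact hx.add hy

theorem inLp_sub {n : ℕ} (p : ℝ) (hp : 1 ≤ p) {x y : Traj n} (hx : InLp p x) (hy : InLp p y) :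
    InLp p (x - y) := by
  rw [inLp_iff_mem p hp] at *
  exact hx.sub hy

theorem inLp_diff {r m : ℕ} (p : ℝ) (hp : 1 ≤ p)
    (Gt : Traj m → Traj r)
    (hGt : StrictlyCausal Gt)
    (hGtstab : ∀ u : Traj m, InLp p u → InLp p (Gt u))
    (hGtifg : ∃ γ : ℝ, 0 ≤ γ ∧ ∀ u₁ u₂ : Traj m, InLp p u₁ → InLp p u₂ →
      lpSeqNorm p (Gt u₁ - Gt u₂) ≤ γ * lpSeqNorm p (u₁ - u₂))
    (u d : Traj m) (hd : InLp p d) : InLp p (Gt (u + d) - Gt u) := by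
  obtain ⟨γ, hγ, H⟩ := hGtifg
  have hp0 : 0 < p := by linarith
  refine summable_of_sum_range_le (c := (γ * lpSeqNorm p d) ^ p)
    (fun t => by positivity) (fun T => ?_)
  let w : Traj m := fun s => if s < T then u s else 0
  have hw : InLp p w := by
    refine summable_of_ne_finset_zero (s := Finset.range T) (fun t ht => ?_)
    have : ¬ t < T := by simpa using ht
    simp [w, this, Real.zero_rpow hp0.ne']
  have hwd := inLp_add p hp hw hd
  have hle := H (w + d) w hwd hw
  rw [add_sub_cancel_left] at hle
  have hS : InLp p (Gt (w + d) - Gt w) := inLp_sub p hp (hGtstab _ hwd) (hGtstab _ hw)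
  have hnn : 0 ≤ ∑' t, ‖(Gt (w + d) - Gt w) t‖ ^ p := tsum_nonneg fun t => by positivity
  calc ∑ t ∈ Finset.range T, ‖(Gt (u + d) - Gt u) t‖ ^ p
      = ∑ t ∈ Finset.range T, ‖(Gt (w + d) - Gt w) t‖ ^ p := by
        refine Finset.sum_congr rfl fun t ht => ?_
        have ht' : t < T := by simpa using ht
        have e1 : Gt (u + d) t = Gt (w + d) t := hGt _ _ _ fun s hs => by
          have : s < T := hs.trans ht'
          simp [w, this]
        have e2 : Gt u t = Gt w t := hGt _ _ _ fun s hs => by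
          have : s < T := hs.trans ht'
          simp [w, this]
        simp only [Pi.sub_apply, e1, e2]
    _ ≤ ∑' t, ‖(Gt (w + d) - Gt w) t‖ ^ p :=
        Summable.sum_le_tsum _ (fun t _ => by positivity) hS
    _ = (lpSeqNorm p (Gt (w + d) - Gt w)) ^ p := by
        unfold lpSeqNorm
        rw [← Real.rpow_mul hnn, one_div, inv_mul_cancel₀ hp0.ne', Real.rpow_one]
    _ ≤ _ := Real.rpow_le_rpow (Real.rpow_nonneg hnn _) hle hp0.le

/-- robustness of the internal-model controller when the mismatch output
`G̃ u − G u` is ℓ_p-summable for EVERY input sequence `u`: then the closed loop is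
ℓ_p-stable for any causal ℓ_p-stable `Q`. -/
theorem statement15 {r m : ℕ} (p : ℝ) (hp : 1 ≤ p)
    (Gt G : Traj m → Traj r) (Q : Traj r → Traj m)
    (hGt : StrictlyCausal Gt)
    (hGtstab : ∀ u : Traj m, InLp p u → InLp p (Gt u))
    (hGtifg : ∃ γ : ℝ, 0 ≤ γ ∧ ∀ u₁ u₂ : Traj m, InLp p u₁ → InLp p u₂ →
      lpSeqNorm p (Gt u₁ - Gt u₂) ≤ γ * lpSeqNorm p (u₁ - u₂))
    (hG : StrictlyCausal G)
    -- the mismatch output is ℓ_p for every input sequence, not only ℓ_p ones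
    (hΔ : ∀ u : Traj m, InLp p (Gt u - G u))
    (hQ : Causal Q)
    (hQstab : ∀ ω : Traj r, InLp p ω → InLp p (Q ω)) :
    ∀ (v : Traj r) (d : Traj m), InLp p v → InLp p d →
      ∀ (y ω : Traj r) (u0 : Traj m),
        u0 = Q ω → ω = y - G u0 → y = Gt (u0 + d) + v →
        InLp p ω ∧ InLp p u0 ∧ InLp p y := by
  intro v d hv hd y ω u0 hu hω hy
  have hωL : InLp p ω := by
    have e : ω = (Gt (u0 + d) - Gt u0) + (Gt u0 - G u0) + v := by
      rw [hω, hy]; abel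
    rw [e]
    exact inLp_add p hp (inLp_add p hp
      (inLp_diff p hp Gt hGt hGtstab hGtifg u0 d hd) (hΔ u0)) hv
  have huL : InLp p u0 := by rw [hu]; exact hQstab _ hωL
  refine ⟨hωL, huL, ?_⟩
  rw [hy]
  exact inLp_add p hp (hGtstab _ (inLp_add p hp huL hd)) hv
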